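/- For every integer L ≥ 18 with L ≡ 4 (mod 8), M_S(L,3) = (L − 4)/8. -/

import Mathlib

open Finset

/-- The set of differences of a codeword `I ⊆ ℤ_L`. -/
def dset {L : ℕ} (I : Finset (ZMod L)) : Finset (ZMod L) :=
  (I ×ˢ I).image fun p => p.1 - p.2

/-- The set of nonzero differences. -/
def dstar {L : ℕ} (I : Finset (ZMod L)) : Finset (ZMod L) := dset I \ {0}

/-- The set of shifted nonzero differences `d⁺(I) = d*(I) ∪ (d*(I)+1)`. -/
def dplus {L : ℕ} (I : Finset (ZMod L)) : Finset (ZMod L) :=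
  dstar I ∪ (dstar I).image (· + 1)

/-- A strongly conflict-avoiding code of length `L` and weight `ω`. -/
def IsSCAC (L ω : ℕ) (C : Finset (Finset (ZMod L))) : Prop :=
  (∀ I ∈ C, I.card = ω) ∧
  (∀ I ∈ C, (1 : ZMod L) ∉ dstar I ∧ (-1 : ZMod L) ∉ dstar I) ∧
  ∀ I ∈ C, ∀ J ∈ C, I ≠ J → Disjoint (dplus I) (dplus J)

/-- `M_S(L,ω)`: the maximum size of an SCAC of length `L` and weight `ω`. -/
noncomputable def MS (L ω : ℕ) : ℕ :=
  sSup {n | ∃ C : Finset (Finset (ZMod L)), IsSCAC L ω C ∧ C.card = n}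

/-!
Identify `d` and `-d`: a codeword of weight three becomes a set `{x, y, z}` of integers in
`[2, L/2]` with `x + y = z` or `x + y + z = L`, and the sets `{x, x+1, y, y+1, z, z+1}` of distinct
codewords are disjoint subsets of `[2, L/2 + 1]`. Such a set has at least two elements, and at least
four unless `⌊L/3⌋` is one of `x, y, z`, which happens for at most one codeword. For `L = 8m + 4`
the interval has `4m + 2` elements, so `m + 1` codewords only fit if one set has two elements, all
others have four, and the dominoes `{x, x+1}` tile the interval. Then every domino starts at an even
number. The codeword whose dominoes include the one at `L/2` has room for just one other domino,
which must start at `L/4 = 2m + 1`, an odd number.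

Conversely the codewords `{0, 2k, 4k}` with `k` odd and `k < 2m` form a code of size `m`.
-/

section WithSucc

variable {R : Type*} [DecidableEq R] [Add R] [One R]

/-- The union `S ∪ (S + 1)`, so that `dplus I` is `withSucc (dstar I)`; it is also used in `ℕ`, for
the absolute values of differences. -/
def withSucc (S : Finset R) : Finset R :=
  S ∪ S.image (· + 1)

theorem mem_withSucc {S : Finset R} {a : R} : a ∈ withSucc S ↔ a ∈ S ∨ ∃ b ∈ S, b + 1 = a := by
  simp only [withSucc, mem_union, mem_image]

theorem subset_withSucc (S : Finset R) : S ⊆ withSucc S :=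
  subset_union_left

theorem add_one_mem_withSucc {S : Finset R} {a : R} (ha : a ∈ S) : a + 1 ∈ withSucc S :=
  mem_withSucc.2 (.inr ⟨a, ha, rfl⟩)

theorem withSucc_biUnion {ι : Type*} (C : Finset ι) (T : ι → Finset R) :
    withSucc (C.biUnion T) = C.biUnion fun i => withSucc (T i) := by
  ext a
  simp only [mem_withSucc, mem_biUnion]
  grind

end WithSucc

section WithSuccNat

theorem natCast_mem_withSucc {R : Type*} [DecidableEq R] [AddMonoidWithOne R] {T : Finset ℕ}
    {S : Finset R} (h : ∀ t ∈ T, (t : R) ∈ S) {a : ℕ} (ha : a ∈ withSucc T) :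
    (a : R) ∈ withSucc S := by
  obtain ha | ⟨b, hb, rfl⟩ := mem_withSucc.1 ha
  · exact subset_withSucc S (h a ha)
  · simpa using add_one_mem_withSucc (h b hb)

variable {T : Finset ℕ}

theorem card_withSucc_of_add_one_notMem (h : ∀ a ∈ T, a + 1 ∉ T) :
    (withSucc T).card = 2 * T.card := by
  have hdisj : Disjoint T (T.image (· + 1)) := by
    rw [disjoint_right]
    simpa using h
  rw [withSucc, card_union_of_disjoint hdisj, card_image_of_injective _ (add_left_injective 1),
    two_mul]

theorem four_le_card_withSucc {a b : ℕ} (ha : a ∈ T) (hb : b ∈ T) (hab : a + 2 ≤ b) :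
    4 ≤ (withSucc T).card := by
  have hsub : ({a, a + 1, b, b + 1} : Finset ℕ) ⊆ withSucc T := by
    grind [mem_withSucc]
  have hcard : ({a, a + 1, b, b + 1} : Finset ℕ).card = 4 := by grind
  exact hcard ▸ card_le_card hsub

theorem three_le_card_withSucc {a : ℕ} (ha : a ∈ T) (ha' : a + 1 ∈ T) :
    3 ≤ (withSucc T).card := by
  have hsub : ({a, a + 1, a + 2} : Finset ℕ) ⊆ withSucc T := by
    grind [mem_withSucc]
  have hcard : ({a, a + 1, a + 2} : Finset ℕ).card = 3 := by grind
  exact hcard ▸ card_le_card hsub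

theorem two_le_card_withSucc (hT : T.Nonempty) : 2 ≤ (withSucc T).card := by
  obtain ⟨a, ha⟩ := hT
  have hsub : ({a, a + 1} : Finset ℕ) ⊆ withSucc T := by
    grind [mem_withSucc]
  have hcard : ({a, a + 1} : Finset ℕ).card = 2 := by grind
  exact hcard ▸ card_le_card hsub

theorem five_le_card_withSucc {a c : ℕ} (ha : a ∈ T) (ha' : a + 1 ∈ T) (hc : c ∈ T)
    (hac : c + 2 ≤ a ∨ a + 3 ≤ c) : 5 ≤ (withSucc T).card := by
  have hsub : ({a, a + 1, a + 2, c, c + 1} : Finset ℕ) ⊆ withSucc T := by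
    grind [mem_withSucc]
  have hcard : ({a, a + 1, a + 2, c, c + 1} : Finset ℕ).card = 5 := by grind
  exact hcard ▸ card_le_card hsub

theorem add_mem_iff_even_of_withSucc_eq_Icc {p n : ℕ} (hgap : ∀ a ∈ T, a + 1 ∉ T)
    (htile : withSucc T = Icc p n) (k : ℕ) (hk : p + k ≤ n) : p + k ∈ T ↔ Even k := by
  have mem_or (a : ℕ) (hpa : p ≤ a) (han : a ≤ n) : a ∈ T ∨ ∃ b ∈ T, b + 1 = a := by
    rw [← mem_withSucc, htile, mem_Icc]
    exact ⟨hpa, han⟩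
  induction k with
  | zero =>
    have hmin : ∀ b ∈ T, p ≤ b := fun b hb => (mem_Icc.1 (htile ▸ subset_withSucc T hb)).1
    grind
  | succ k ih =>
    have halternate : p + (k + 1) ∈ T ↔ p + k ∉ T := by grind
    exact halternate.trans ((ih (by lia)).not.trans Nat.even_add_one.symm)

end WithSuccNat

section DiffTriple

/-- `T` is a possible set of absolute values of the differences of a three-element subset of `ℤ_L`
without differences `±1`: the three differences around the triangle add up to `0` modulo `L`.
The numbers `x, y, z` need not be distinct. -/
structure IsDiffTriple (L : ℕ) (T : Finset ℕ) : Prop where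
  two_le : ∀ t ∈ T, 2 ≤ t
  two_mul_le : ∀ t ∈ T, 2 * t ≤ L
  exists_eq : ∃ x y z, T = {x, y, z} ∧ (x + y = z ∨ x + y + z = L)

namespace IsDiffTriple

variable {L : ℕ} {T : Finset ℕ}

theorem nonempty (hT : IsDiffTriple L T) : T.Nonempty := by
  obtain ⟨x, y, z, rfl, -⟩ := hT.exists_eq
  exact insert_nonempty _ _

theorem withSucc_subset_Icc (hT : IsDiffTriple L T) : withSucc T ⊆ Icc 2 (L / 2 + 1) := by
  intro a ha
  rw [mem_Icc]
  obtain ha | ⟨b, hb, rfl⟩ := mem_withSucc.1 ha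
  · have := hT.two_le a ha
    have := hT.two_mul_le a ha
    lia
  · have := hT.two_le b hb
    have := hT.two_mul_le b hb
    lia

theorem div_three_mem_of_card_withSucc_lt_four (hT : IsDiffTriple L T)
    (h : (withSucc T).card < 4) : L / 3 ∈ T := by
  have hclose : ∀ a ∈ T, ∀ b ∈ T, b ≤ a + 1 := by
    intro a ha b hb
    by_contra! hab
    exact h.not_ge (four_le_card_withSucc ha hb hab)
  have htwo := hT.two_le
  obtain ⟨x, y, z, rfl, hsum⟩ := hT.exists_eq
  simp only [mem_insert, mem_singleton, forall_eq_or_imp, forall_eq] at hclose htwo ⊢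
  lia

theorem add_one_notMem (hT : IsDiffTriple L T) (hthird : L / 3 ∉ T)
    (hcard : (withSucc T).card ≤ 4) : ∀ a ∈ T, a + 1 ∉ T := by
  intro a ha ha'
  have hnear : ∀ c ∈ T, a ≤ c + 1 ∧ c ≤ a + 2 := by
    intro c hc
    by_contra hfar
    have := five_le_card_withSucc ha ha' hc (by lia)
    lia
  have htwo := hT.two_le
  obtain ⟨x, y, z, rfl, hsum⟩ := hT.exists_eq
  simp only [mem_insert, mem_singleton, forall_eq_or_imp, forall_eq] at hnear htwo ha ha' hthird
  lia

theorem quarter_mem {q : ℕ} (hT : IsDiffTriple (4 * q) T) (hhalf : 2 * q ∈ T)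
    (hgap : ∀ a ∈ T, a + 1 ∉ T) (hcard : (withSucc T).card ≤ 4) : q ∈ T := by
  have hcard_le : T.card ≤ 2 := by
    rw [card_withSucc_of_add_one_notMem hgap] at hcard
    lia
  have htwo := hT.two_le
  have hle := hT.two_mul_le
  obtain ⟨x, y, z, rfl, hsum⟩ := hT.exists_eq
  have hrep : x = y ∨ x = z ∨ y = z := by
    by_contra! hne
    have := card_eq_three.2 ⟨x, y, z, hne.1, hne.2.1, hne.2.2, rfl⟩
    lia
  simp only [mem_insert, mem_singleton, forall_eq_or_imp, forall_eq] at hhalf hle htwo ⊢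
  lia

end IsDiffTriple

end DiffTriple

section Packing

variable {L : ℕ} {ι : Type*} {C : Finset ι} {T : ι → Finset ℕ}

theorem sum_card_withSucc_le (hT : ∀ i ∈ C, IsDiffTriple L (T i))
    (hdisj : (C : Set ι).PairwiseDisjoint fun i => withSucc (T i)) :
    ∑ i ∈ C, (withSucc (T i)).card ≤ L / 2 := by
  calc ∑ i ∈ C, (withSucc (T i)).card
      = (C.biUnion fun i => withSucc (T i)).card := (card_biUnion hdisj).symm
    _ ≤ (Icc 2 (L / 2 + 1)).card :=
        card_le_card (biUnion_subset.2 fun i hi => (hT i hi).withSucc_subset_Icc)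
    _ = L / 2 := by simp

theorem add_one_notMem_biUnion (hdisj : (C : Set ι).PairwiseDisjoint fun i => withSucc (T i))
    (hgap : ∀ i ∈ C, ∀ a ∈ T i, a + 1 ∉ T i) : ∀ a ∈ C.biUnion T, a + 1 ∉ C.biUnion T := by
  intro a ha ha'
  obtain ⟨i, hi, hai⟩ := mem_biUnion.1 ha
  obtain ⟨j, hj, haj⟩ := mem_biUnion.1 ha'
  obtain rfl : i = j := hdisj.elim_finset hi hj (a + 1) (add_one_mem_withSucc hai)
    (subset_withSucc _ haj)
  exact hgap i hi a hai haj

theorem exists_div_three_mem (hT : ∀ i ∈ C, IsDiffTriple L (T i))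
    (hdisj : (C : Set ι).PairwiseDisjoint fun i => withSucc (T i)) (hcard : L / 2 < 4 * C.card) :
    ∃ i ∈ C, L / 3 ∈ T i := by
  have hsum : ∑ i ∈ C, (withSucc (T i)).card < ∑ i ∈ C, 4 := by
    have := sum_card_withSucc_le hT hdisj
    rw [sum_const, smul_eq_mul]
    lia
  obtain ⟨i, hi, hlt⟩ := exists_lt_of_sum_lt hsum
  exact ⟨i, hi, (hT i hi).div_three_mem_of_card_withSucc_lt_four hlt⟩

theorem notMem_of_mem_of_ne (hdisj : (C : Set ι).PairwiseDisjoint fun i => withSucc (T i))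
    {i j : ι} (hi : i ∈ C) (hj : j ∈ C) (hne : j ≠ i) {a : ℕ} (ha : a ∈ T i) : a ∉ T j :=
  fun hmem => hne (hdisj.elim_finset hj hi _ (subset_withSucc _ hmem) (subset_withSucc _ ha))

theorem card_withSucc_of_div_three_mem (hT : ∀ i ∈ C, IsDiffTriple L (T i))
    (hdisj : (C : Set ι).PairwiseDisjoint fun i => withSucc (T i))
    (hcard : L / 2 + 2 ≤ 4 * C.card) {i₀ : ι} (hi₀ : i₀ ∈ C) (hthird : L / 3 ∈ T i₀) :
    (withSucc (T i₀)).card = 2 ∧ ∀ j ∈ C, j ≠ i₀ → (withSucc (T j)).card = 4 := by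
  classical
  have hfour : ∀ j ∈ C.erase i₀, 4 ≤ (withSucc (T j)).card := by
    intro j hj
    obtain ⟨hne, hj⟩ := mem_erase.1 hj
    by_contra! hlt
    exact notMem_of_mem_of_ne hdisj hi₀ hj hne hthird
      ((hT j hj).div_three_mem_of_card_withSucc_lt_four hlt)
  have htwo := two_le_card_withSucc (hT i₀ hi₀).nonempty
  have htotal := sum_card_withSucc_le hT hdisj
  rw [← add_sum_erase C _ hi₀] at htotal
  have hlower := sum_le_sum hfour
  have hconst : ∑ j ∈ C.erase i₀, 4 = 4 * C.card - 4 := by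
    rw [sum_const, card_erase_of_mem hi₀, smul_eq_mul]
    lia
  refine ⟨by lia, fun j hj hne => ?_⟩
  have hsum_eq : ∑ j ∈ C.erase i₀, 4 = ∑ j ∈ C.erase i₀, (withSucc (T j)).card := by lia
  exact ((sum_eq_sum_iff_of_le hfour).1 hsum_eq j (mem_erase.2 ⟨hne, hj⟩)).symm

theorem card_withSucc_le_four_and_add_one_notMem (hT : ∀ i ∈ C, IsDiffTriple L (T i))
    (hdisj : (C : Set ι).PairwiseDisjoint fun i => withSucc (T i))
    (hcard : L / 2 + 2 ≤ 4 * C.card) :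
    ∀ i ∈ C, (withSucc (T i)).card ≤ 4 ∧ ∀ a ∈ T i, a + 1 ∉ T i := by
  obtain ⟨i₀, hi₀, hthird⟩ := exists_div_three_mem hT hdisj (by lia)
  obtain ⟨htwo, hfour⟩ := card_withSucc_of_div_three_mem hT hdisj hcard hi₀ hthird
  intro i hi
  by_cases hne : i = i₀
  · subst hne
    refine ⟨by lia, fun a ha ha' => ?_⟩
    have := three_le_card_withSucc ha ha'
    lia
  · have hle := (hfour i hi hne).le
    exact ⟨hle, (hT i hi).add_one_notMem (notMem_of_mem_of_ne hdisj hi₀ hi hne hthird) hle⟩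

theorem withSucc_biUnion_eq_Icc (hT : ∀ i ∈ C, IsDiffTriple L (T i))
    (hdisj : (C : Set ι).PairwiseDisjoint fun i => withSucc (T i))
    (hcard : L / 2 + 2 ≤ 4 * C.card) : withSucc (C.biUnion T) = Icc 2 (L / 2 + 1) := by
  classical
  obtain ⟨i₀, hi₀, hthird⟩ := exists_div_three_mem hT hdisj (by lia)
  obtain ⟨htwo, hfour⟩ := card_withSucc_of_div_three_mem hT hdisj hcard hi₀ hthird
  rw [withSucc_biUnion]
  refine eq_of_subset_of_card_le (biUnion_subset.2 fun i hi => (hT i hi).withSucc_subset_Icc) ?_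
  have hrest : ∑ j ∈ C.erase i₀, (withSucc (T j)).card = 4 * (C.card - 1) := by
    rw [sum_congr rfl fun j hj => hfour j (mem_of_mem_erase hj) (ne_of_mem_erase hj), sum_const,
      card_erase_of_mem hi₀, smul_eq_mul, mul_comm]
  rw [Nat.card_Icc, card_biUnion hdisj, ← add_sum_erase C _ hi₀, htwo, hrest]
  lia

theorem card_le_of_pairwiseDisjoint_withSucc {m : ℕ}
    (hT : ∀ i ∈ C, IsDiffTriple (8 * m + 4) (T i))
    (hdisj : (C : Set ι).PairwiseDisjoint fun i => withSucc (T i)) : C.card ≤ m := by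
  by_contra! hcard
  have htight := card_withSucc_le_four_and_add_one_notMem hT hdisj (by lia)
  have htile := withSucc_biUnion_eq_Icc hT hdisj (by lia)
  have hgap := add_one_notMem_biUnion hdisj fun i hi => (htight i hi).2
  have mem_iff_even := add_mem_iff_even_of_withSucc_eq_Icc hgap htile
  have hhalf : 2 * (2 * m + 1) ∈ C.biUnion T := by
    rw [show 2 * (2 * m + 1) = 2 + 4 * m by ring, mem_iff_even _ (by lia)]
    exact ⟨2 * m, by ring⟩
  obtain ⟨i, hi, hhalf⟩ := mem_biUnion.1 hhalf
  have hquarter : 2 * m + 1 ∈ T i :=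
    IsDiffTriple.quarter_mem (by convert hT i hi using 1; ring) hhalf (htight i hi).2
      (htight i hi).1
  have htwo_le := (hT i hi).two_le _ hquarter
  have heven : Even (2 * m - 1) := by
    rw [← mem_iff_even _ (by lia), show 2 + (2 * m - 1) = 2 * m + 1 by lia]
    exact mem_biUnion.2 ⟨i, hi, hquarter⟩
  grind

end Packing

section Differences

variable {L : ℕ} {I : Finset (ZMod L)} {d : ZMod L}

theorem mem_dstar : d ∈ dstar I ↔ d ≠ 0 ∧ ∃ a ∈ I, ∃ b ∈ I, a - b = d := by
  simp only [dstar, dset, mem_sdiff, mem_image, mem_product, mem_singleton, Prod.exists]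
  grind

theorem neg_mem_dstar (hd : d ∈ dstar I) : -d ∈ dstar I := by
  obtain ⟨hd0, a, ha, b, hb, rfl⟩ := mem_dstar.1 hd
  exact mem_dstar.2 ⟨neg_ne_zero.2 hd0, b, hb, a, ha, (neg_sub a b).symm⟩

theorem dplus_nonempty (hI : 1 < I.card) : (dplus I).Nonempty := by
  obtain ⟨a, ha, b, hb, hab⟩ := one_lt_card.1 hI
  exact ⟨a - b, subset_withSucc _ (mem_dstar.2 ⟨sub_ne_zero.2 hab, a, ha, b, hb, rfl⟩)⟩

/-- The absolute values of the nonzero differences of `I`, where the absolute value of a residue is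
its distance to `0` on the cycle `ℤ_L`, a natural number at most `L / 2`. -/
def absDiffs (I : Finset (ZMod L)) : Finset ℕ :=
  (dstar I).image fun d => d.valMinAbs.natAbs

theorem absDiffs_triple {a b c : ZMod L} (hab : a ≠ b) (hbc : b ≠ c) (hca : c ≠ a) :
    absDiffs {a, b, c} =
      {(a - b).valMinAbs.natAbs, (b - c).valMinAbs.natAbs, (c - a).valMinAbs.natAbs} := by
  have natAbs_sub_comm (u v : ZMod L) : (u - v).valMinAbs.natAbs = (v - u).valMinAbs.natAbs := by
    rw [← neg_sub, ZMod.natAbs_valMinAbs_neg]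
  have hdstar : dstar {a, b, c} = {a - b, b - a, b - c, c - b, c - a, a - c} := by
    ext d
    simp only [mem_dstar, mem_insert, mem_singleton, exists_eq_or_imp, exists_eq_left]
    grind
  simp only [absDiffs, hdstar, image_insert, image_singleton, natAbs_sub_comm b a,
    natAbs_sub_comm c b, natAbs_sub_comm a c]
  grind

variable [NeZero L]

theorem natCast_mem_dstar_of_mem_absDiffs {t : ℕ} (ht : t ∈ absDiffs I) :
    (t : ZMod L) ∈ dstar I := by
  obtain ⟨d, hd, rfl⟩ := mem_image.1 ht
  rw [ZMod.natCast_natAbs_valMinAbs]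
  split_ifs
  · exact hd
  · exact neg_mem_dstar hd

theorem natAbs_valMinAbs_of_add_add_eq_zero {u v w : ZMod L} (hsum : u + v + w = 0) :
    u.valMinAbs.natAbs + v.valMinAbs.natAbs = w.valMinAbs.natAbs ∨
    v.valMinAbs.natAbs + w.valMinAbs.natAbs = u.valMinAbs.natAbs ∨
    w.valMinAbs.natAbs + u.valMinAbs.natAbs = v.valMinAbs.natAbs ∨
    u.valMinAbs.natAbs + v.valMinAbs.natAbs + w.valMinAbs.natAbs = L := by
  have hdvd : (L : ℤ) ∣ u.valMinAbs + v.valMinAbs + w.valMinAbs := by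
    rw [← ZMod.intCast_zmod_eq_zero_iff_dvd]
    simpa using hsum
  obtain ⟨hu₁, hu₂⟩ := ZMod.valMinAbs_mem_Ioc u
  obtain ⟨hv₁, hv₂⟩ := ZMod.valMinAbs_mem_Ioc v
  obtain ⟨hw₁, hw₂⟩ := ZMod.valMinAbs_mem_Ioc w
  obtain ⟨k, hk⟩ := hdvd
  have hk_lt : k < 2 := by nlinarith
  have hk_gt : -2 < k := by nlinarith
  obtain rfl | rfl | rfl : k = -1 ∨ k = 0 ∨ k = 1 := by lia
  all_goals lia

theorem isDiffTriple_absDiffs (hI : I.card = 3) (hone : (1 : ZMod L) ∉ dstar I) :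
    IsDiffTriple L (absDiffs I) where
  two_le t ht := by
    have hmem := natCast_mem_dstar_of_mem_absDiffs ht
    have hzero : t ≠ 0 := by
      rintro rfl
      simp [mem_dstar] at hmem
    have hone : t ≠ 1 := by
      rintro rfl
      exact hone (by simpa using hmem)
    lia
  two_mul_le t ht := by
    obtain ⟨d, -, rfl⟩ := mem_image.1 ht
    have := ZMod.natAbs_valMinAbs_le d
    lia
  exists_eq := by
    obtain ⟨a, b, c, hab, hac, hbc, rfl⟩ := card_eq_three.1 hI
    rw [absDiffs_triple hab hbc hac.symm]
    have hsum : (a - b) + (b - c) + (c - a) = 0 := by ring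
    obtain h | h | h | h := natAbs_valMinAbs_of_add_add_eq_zero hsum
    · exact ⟨_, _, _, rfl, .inl h⟩
    · exact ⟨_, _, _, by grind, .inl h⟩
    · exact ⟨_, _, _, by grind, .inl h⟩
    · exact ⟨_, _, _, rfl, .inr h⟩

theorem disjoint_withSucc_absDiffs {J : Finset (ZMod L)} (h : Disjoint (dplus I) (dplus J)) :
    Disjoint (withSucc (absDiffs I)) (withSucc (absDiffs J)) := by
  rw [disjoint_left] at h ⊢
  intro a haI haJ
  exact h (natCast_mem_withSucc (fun _ => natCast_mem_dstar_of_mem_absDiffs) haI)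
    (natCast_mem_withSucc (fun _ => natCast_mem_dstar_of_mem_absDiffs) haJ)

end Differences

theorem IsSCAC.card_le {m : ℕ} {C : Finset (Finset (ZMod (8 * m + 4)))}
    (hC : IsSCAC (8 * m + 4) 3 C) : C.card ≤ m := by
  obtain ⟨hcard, hone, hdisj⟩ := hC
  exact card_le_of_pairwiseDisjoint_withSucc
    (fun I hI => isDiffTriple_absDiffs (hcard I hI) (hone I hI).1)
    fun I hI J hJ hne => disjoint_withSucc_absDiffs (hdisj I hI J hJ hne)

section Construction

/-- The codeword `{0, a, 2a}` with `a = 2(2i + 1)`; those with `i < m` form an optimal code. -/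
def progressionCodeword (m i : ℕ) : Finset (ZMod (8 * m + 4)) :=
  {0, ((4 * i + 2 : ℕ) : ZMod (8 * m + 4)), ((8 * i + 4 : ℕ) : ZMod (8 * m + 4))}

variable {m i j : ℕ} {d : ZMod (8 * m + 4)}

theorem card_progressionCodeword (hi : i < m) : (progressionCodeword m i).card = 3 := by
  have hzero : (0 : ZMod (8 * m + 4)) = (0 : ℕ) := by simp
  rw [progressionCodeword, hzero]
  refine card_eq_three.2 ⟨_, _, _, ?_, ?_, ?_, rfl⟩
  all_goals
    intro h
    have := congrArg ZMod.val h
    rw [ZMod.val_natCast_of_lt (by lia), ZMod.val_natCast_of_lt (by lia)] at this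
    lia

theorem val_of_mem_dstar_progressionCodeword (hi : i < m)
    (hd : d ∈ dstar (progressionCodeword m i)) :
    d.val = 4 * i + 2 ∨ d.val = 8 * i + 4 ∨ d.val = 8 * m + 2 - 4 * i ∨ d.val = 8 * m - 8 * i := by
  have hdouble : ((8 * i + 4 : ℕ) : ZMod (8 * m + 4)) = 2 * (4 * i + 2 : ℕ) := by
    push_cast
    ring
  have hd_cases : d = (4 * i + 2 : ℕ) ∨ d = (8 * i + 4 : ℕ) ∨ d = -(4 * i + 2 : ℕ) ∨
      d = -(8 * i + 4 : ℕ) := by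
    simp only [mem_dstar, progressionCodeword, mem_insert, mem_singleton] at hd
    grind
  have hval {n : ℕ} (hn : n < 8 * m + 4) (hn0 : n ≠ 0) :
      (n : ZMod (8 * m + 4)).val = n ∧ (-n : ZMod (8 * m + 4)).val = 8 * m + 4 - n := by
    have hval_n := ZMod.val_natCast_of_lt hn
    have : NeZero (n : ZMod (8 * m + 4)) := ⟨fun h => hn0 (by simpa [h] using hval_n.symm)⟩
    exact ⟨hval_n, by rw [ZMod.val_neg_of_ne_zero, hval_n]⟩
  obtain ⟨hval₁, hval₂⟩ := hval (n := 4 * i + 2) (by lia) (by lia)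
  obtain ⟨hval₃, hval₄⟩ := hval (n := 8 * i + 4) (by lia) (by lia)
  obtain rfl | rfl | rfl | rfl := hd_cases <;> lia

theorem val_div_two_of_mem_dplus_progressionCodeword (hi : i < m)
    (hd : d ∈ dplus (progressionCodeword m i)) :
    d.val / 2 = 2 * i + 1 ∨ d.val / 2 = 4 * i + 2 ∨ d.val / 2 = 4 * m + 1 - 2 * i ∨
      d.val / 2 = 4 * m - 4 * i := by
  obtain hd | ⟨e, he, rfl⟩ := mem_withSucc.1 hd
  · have := val_of_mem_dstar_progressionCodeword hi hd
    lia
  · have := val_of_mem_dstar_progressionCodeword hi he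
    have hval_one : (1 : ZMod (8 * m + 4)).val = 1 := ZMod.val_one'' (by lia)
    have hval := ZMod.val_add_of_lt (a := e) (b := 1) (by lia)
    lia

theorem disjoint_dplus_progressionCodeword (hi : i < m) (hj : j < m) (hij : i ≠ j) :
    Disjoint (dplus (progressionCodeword m i)) (dplus (progressionCodeword m j)) := by
  rw [disjoint_left]
  intro d hdi hdj
  have := val_div_two_of_mem_dplus_progressionCodeword hi hdi
  have := val_div_two_of_mem_dplus_progressionCodeword hj hdj
  lia

theorem one_notMem_dstar_progressionCodeword (hi : i < m) :
    1 ∉ dstar (progressionCodeword m i) := by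
  intro h
  have hval_one : (1 : ZMod (8 * m + 4)).val = 1 := ZMod.val_one'' (by lia)
  have := val_of_mem_dstar_progressionCodeword hi h
  lia

theorem progressionCodeword_injOn : Set.InjOn (progressionCodeword m) (range m) := by
  intro i hi j hj hij
  rw [coe_range, Set.mem_Iio] at hi hj
  by_contra hne
  have hdisj := disjoint_dplus_progressionCodeword hi hj hne
  rw [← hij, disjoint_self_iff_empty] at hdisj
  exact (dplus_nonempty (by rw [card_progressionCodeword hi]; lia)).ne_empty hdisj

theorem isSCAC_image_progressionCodeword (m : ℕ) :
    IsSCAC (8 * m + 4) 3 ((range m).image (progressionCodeword m)) := by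
  simp only [IsSCAC, forall_mem_image, mem_range]
  refine ⟨fun i hi => card_progressionCodeword hi, fun i hi => ?_, fun i hi j hj hne => ?_⟩
  · have hone := one_notMem_dstar_progressionCodeword hi
    exact ⟨hone, fun h => hone (by simpa using neg_mem_dstar h)⟩
  · exact disjoint_dplus_progressionCodeword hi hj fun h => hne (by rw [h])

end Construction

theorem MS_eq_of_mod8_eq_4_general (L : ℕ) (hmod : L % 8 = 4) : MS L 3 = (L - 4) / 8 := by
  obtain ⟨m, rfl⟩ : ∃ m, L = 8 * m + 4 := ⟨L / 8, by lia⟩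
  rw [show (8 * m + 4 - 4) / 8 = m by lia]
  refine IsGreatest.csSup_eq ⟨⟨_, isSCAC_image_progressionCodeword m, ?_⟩, ?_⟩
  · rw [card_image_of_injOn progressionCodeword_injOn, card_range]
  · rintro _ ⟨C, hC, rfl⟩
    exact hC.card_le

theorem MS_eq_of_mod8_eq_4 (L : ℕ) (hL : 18 ≤ L) (hmod : L % 8 = 4) :
    MS L 3 = (L - 4) / 8 :=
  MS_eq_of_mod8_eq_4_general L hmod
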